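/- arXiv:2203.06095 — 3 statements merged into one kernel-verified Lean document; each statement's English description precedes it below -/
import Mathlib

section
/- Let n ≥ 1, let z, w : Fin n → {0,1} be two n-bit strings, and let A_{z,w} be the 2^n × 2^n complex matrix of |z⟩⟨w| + |w⟩⟨z|, i.e. its (a,b) entry is [a = z ∧ b = w] + [a = w ∧ b = z]. Then any two Pauli strings that appear with nonvanishing coefficient in the Pauli-string decomposition of A_{z,w} commute: for all s, s' : Fin n → {0,1,2,3}, if trace(P_s · A_{z,w}) ≠ 0 and trace(P_{s'} · A_{z,w}) ≠ 0, then P_s · P_{s'} = P_{s'} · P_s. -/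
open Matrix

/-- The four single-qubit Pauli matrices `I, X, Y, Z`. -/
noncomputable def pauli : Fin 4 → Matrix (Fin 2) (Fin 2) ℂ :=
  ![!![1, 0; 0, 1], !![0, 1; 1, 0], !![0, -Complex.I; Complex.I, 0], !![1, 0; 0, -1]]

/-- The Pauli string `σ_{s 0} ⊗ ⋯ ⊗ σ_{s (n-1)}` as a `2^n × 2^n` matrix indexed by
bitstrings. -/
noncomputable def pauliString (n : ℕ) (s : Fin n → Fin 4) :
    Matrix (Fin n → Fin 2) (Fin n → Fin 2) ℂ :=
  Matrix.of fun a b => ∏ i, pauli (s i) (a i) (b i)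

/-- The matrix `|z⟩⟨w| + |w⟩⟨z|` for two computational basis states `z, w`. -/
def ketbraSym {n : ℕ} (z w : Fin n → Fin 2) :
    Matrix (Fin n → Fin 2) (Fin n → Fin 2) ℂ :=
  Matrix.of fun a b =>
    (if a = z ∧ b = w then 1 else 0) + (if a = w ∧ b = z then 1 else 0)

/-!
A Pauli string is, up to sign, its own transpose, so its trace against a symmetric matrix vanishes
unless it is symmetric. It is also supported on the index pairs `(a, b)` whose bitwise XOR is a
fixed string, so having a nonzero trace against `|z⟩⟨w| + |w⟩⟨z|` forces that string to be the XOR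
of `z` and `w`. The product of two Pauli strings with the same XOR pattern is diagonal, and two
symmetric matrices whose product is symmetric commute.
-/

section Matrix

variable {ι κ R : Type*} [Fintype ι]

lemma exists_apply_ne_zero_of_trace_mul_ne_zero [Fintype κ] [NonUnitalNonAssocSemiring R]
    {M : Matrix ι κ R} {N : Matrix κ ι R} (h : (M * N).trace ≠ 0) :
    ∃ i j, M i j ≠ 0 ∧ N j i ≠ 0 := by
  obtain ⟨i, -, hi⟩ := Finset.exists_ne_zero_of_sum_ne_zero h
  obtain ⟨j, -, hij⟩ := Finset.exists_ne_zero_of_sum_ne_zero hi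
  exact ⟨i, j, left_ne_zero_of_mul hij, right_ne_zero_of_mul hij⟩

lemma trace_mul_eq_zero_of_transpose_eq_neg [NonUnitalCommRing R] [IsAddTorsionFree R]
    {M N : Matrix ι ι R} (hM : Mᵀ = -M) (hN : N.IsSymm) : (M * N).trace = 0 := by
  refine self_eq_neg.mp ?_
  calc (M * N).trace = (Nᵀ * Mᵀ).trace := by rw [← transpose_mul, trace_transpose]
    _ = -(M * N).trace := by rw [hN.eq, hM, mul_neg, trace_neg, trace_mul_comm]

lemma isSymm_mul_iff_commute [NonUnitalCommSemiring R] {M N : Matrix ι ι R} (hM : M.IsSymm)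
    (hN : N.IsSymm) : (M * N).IsSymm ↔ Commute M N := by
  rw [IsSymm, transpose_mul, hM.eq, hN.eq, eq_comm, commute_iff_eq]

lemma isDiag_mul_of_add_eq [AddCommMagma ι] [IsRightCancelAdd ι] [NonUnitalNonAssocSemiring R]
    {M N : Matrix ι ι R} {d : ι} (hM : ∀ i j, M i j ≠ 0 → i + j = d)
    (hN : ∀ i j, N i j ≠ 0 → i + j = d) : (M * N).IsDiag := by
  intro i j hij
  by_contra h
  obtain ⟨k, -, hk⟩ := Finset.exists_ne_zero_of_sum_ne_zero h
  have hik : i + k = d := hM i k (left_ne_zero_of_mul hk)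
  have hkj : k + j = d := hN k j (right_ne_zero_of_mul hk)
  exact hij (add_right_cancel (hik.trans (hkj.symm.trans (add_comm k j))))

end Matrix

/-- The bit-flip part of a Pauli matrix, `1` for `X` and `Y` and `0` for `I` and `Z`. It encodes
the support of the matrix, bitwise XOR being addition in `Fin 2`. -/
def pauliFlip : Fin 4 → Fin 2 := ![0, 1, 1, 0]

/-- The sign by which transposition multiplies a Pauli matrix, `-1` for `Y` only. -/
def pauliTransposeSign : Fin 4 → ℤˣ := ![1, 1, -1, 1]

lemma pauli_apply_ne_zero_iff (k : Fin 4) (a b : Fin 2) :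
    pauli k a b ≠ 0 ↔ a + b = pauliFlip k := by
  fin_cases k <;> fin_cases a <;> fin_cases b <;> simp [pauli, pauliFlip]

lemma pauli_transpose (k : Fin 4) : (pauli k)ᵀ = pauliTransposeSign k • pauli k := by
  ext a b
  fin_cases k <;> fin_cases a <;> fin_cases b <;> simp [pauli, pauliTransposeSign]

section PauliString

variable {n : ℕ} {s s' : Fin n → Fin 4}

lemma pauliString_apply_ne_zero_iff {a b : Fin n → Fin 2} :
    pauliString n s a b ≠ 0 ↔ a + b = pauliFlip ∘ s := by
  simp only [pauliString, of_apply, Finset.prod_ne_zero_iff, Finset.mem_univ, true_imp_iff,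
    pauli_apply_ne_zero_iff, funext_iff, Pi.add_apply, Function.comp_apply]

lemma pauliString_transpose (s : Fin n → Fin 4) :
    (pauliString n s)ᵀ = (∏ i, pauliTransposeSign (s i)) • pauliString n s := by
  ext a b
  have hentry (i : Fin n) :
      pauli (s i) (b i) (a i) = pauliTransposeSign (s i) • pauli (s i) (a i) (b i) :=
    congrFun₂ (pauli_transpose (s i)) (a i) (b i)
  simp only [transpose_apply, Matrix.smul_apply, pauliString, of_apply, hentry, Finset.prod_smul]

lemma pauliString_isSymm_of_trace_mul_ne_zero {A : Matrix (Fin n → Fin 2) (Fin n → Fin 2) ℂ}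
    (hA : A.IsSymm) (hs : (pauliString n s * A).trace ≠ 0) : (pauliString n s).IsSymm := by
  have htranspose := pauliString_transpose s
  rcases Int.units_eq_one_or (∏ i, pauliTransposeSign (s i)) with hsign | hsign
  · rwa [hsign, one_smul] at htranspose
  · rw [hsign, Units.neg_smul, one_smul] at htranspose
    exact absurd (trace_mul_eq_zero_of_transpose_eq_neg htranspose hA) hs

lemma pauliFlip_comp_eq_of_trace_mul_ne_zero {A : Matrix (Fin n → Fin 2) (Fin n → Fin 2) ℂ}
    {d : Fin n → Fin 2} (hA : ∀ a b, A a b ≠ 0 → a + b = d)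
    (hs : (pauliString n s * A).trace ≠ 0) : pauliFlip ∘ s = d := by
  obtain ⟨a, b, hP, hAba⟩ := exists_apply_ne_zero_of_trace_mul_ne_zero hs
  rw [← pauliString_apply_ne_zero_iff.mp hP, add_comm, hA b a hAba]

lemma commute_pauliString_of_isSymm (hs : (pauliString n s).IsSymm)
    (hs' : (pauliString n s').IsSymm) (hflip : pauliFlip ∘ s = pauliFlip ∘ s') :
    Commute (pauliString n s) (pauliString n s') := by
  have hdiag : (pauliString n s * pauliString n s').IsDiag :=
    isDiag_mul_of_add_eq (fun _ _ ↦ pauliString_apply_ne_zero_iff.mp)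
      fun _ _ h ↦ (pauliString_apply_ne_zero_iff.mp h).trans hflip.symm
  exact (isSymm_mul_iff_commute hs hs').mp hdiag.isSymm

end PauliString

section KetbraSym

variable {n : ℕ} (z w : Fin n → Fin 2)

lemma ketbraSym_isSymm : (ketbraSym z w).IsSymm := by
  ext a b
  simp only [ketbraSym, transpose_apply, of_apply, and_comm, add_comm]

variable {z w}

lemma add_eq_of_ketbraSym_apply_ne_zero {a b : Fin n → Fin 2} (h : ketbraSym z w a b ≠ 0) :
    a + b = z + w := by
  contrapose! h
  have hzw : ¬(a = z ∧ b = w) := by rintro ⟨rfl, rfl⟩; exact h rfl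
  have hwz : ¬(a = w ∧ b = z) := by rintro ⟨rfl, rfl⟩; exact h (add_comm _ _)
  simp only [ketbraSym, of_apply, if_neg hzw, if_neg hwz, add_zero]

end KetbraSym

theorem pauli_strings_of_ketbraSym_commute_general {n : ℕ} {d : Fin n → Fin 2}
    {A : Matrix (Fin n → Fin 2) (Fin n → Fin 2) ℂ} (hA : A.IsSymm)
    (hAd : ∀ a b, A a b ≠ 0 → a + b = d) {s s' : Fin n → Fin 4}
    (hs : (pauliString n s * A).trace ≠ 0) (hs' : (pauliString n s' * A).trace ≠ 0) :
    Commute (pauliString n s) (pauliString n s') :=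
  commute_pauliString_of_isSymm (pauliString_isSymm_of_trace_mul_ne_zero hA hs)
    (pauliString_isSymm_of_trace_mul_ne_zero hA hs')
    ((pauliFlip_comp_eq_of_trace_mul_ne_zero hAd hs).trans
      (pauliFlip_comp_eq_of_trace_mul_ne_zero hAd hs').symm)

/-- Any two Pauli strings appearing with nonvanishing coefficient in the
Pauli decomposition of `|z⟩⟨w| + |w⟩⟨z|` commute. -/
theorem pauli_strings_of_ketbraSym_commute (n : ℕ) (hn : 1 ≤ n)
    (z w : Fin n → Fin 2) (s s' : Fin n → Fin 4)
    (hs : (pauliString n s * ketbraSym z w).trace ≠ 0)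
    (hs' : (pauliString n s' * ketbraSym z w).trace ≠ 0) :
    pauliString n s * pauliString n s' = pauliString n s' * pauliString n s := by
  exact pauli_strings_of_ketbraSym_commute_general (ketbraSym_isSymm z w)
    (fun _ _ ↦ add_eq_of_ketbraSym_apply_ne_zero) hs hs'
end

section
/- Let n ≥ 1 and 1 ≤ m ≤ n. For a subset S ⊆ Fin n, let s_S : Fin n → {0,1,2,3} assign 1 (i.e. X) at positions in S and 0 (i.e. I) elsewhere. Then the sum over all subsets S of cardinality m of the Pauli strings P_{s_S} equals the Hamming-distance-m matrix: Σ_{S : |S| = m} P_{s_S} is the 2^n × 2^n matrix whose (a,b) entry is 1 if the Hamming distance between the bitstrings a and b equals m, and 0 otherwise. In other words, the mixer Hamiltonian generated by the transition matrix T_{Ham(m)} is the sum of all (n choose m) Pauli strings consisting of exactly m X factors. -/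
open Matrix

/-!
The factors `I` and `X` are the indicator matrices of `x = y` and `x ≠ y`. Hence a string with
`X` exactly on `S` has a nonzero `(a, b)` entry, equal to `1`, only when `S` is the set of
positions where `a` and `b` differ, so at most one term of the sum contributes to each entry.
-/

theorem pauli_zero_apply (x y : Fin 2) : pauli 0 x y = if x = y then 1 else 0 := by
  fin_cases x <;> fin_cases y <;> simp [pauli]

theorem pauli_one_apply (x y : Fin 2) : pauli 1 x y = if x ≠ y then 1 else 0 := by
  fin_cases x <;> fin_cases y <;> simp [pauli]

section XString

variable {n : ℕ}

theorem pauliString_X_apply (S : Finset (Fin n)) (a b : Fin n → Fin 2) :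
    pauliString n (fun i => if i ∈ S then 1 else 0) a b =
      if ({i | a i ≠ b i} : Finset (Fin n)) = S then 1 else 0 := by
  have factor_apply (i : Fin n) :
      pauli (if i ∈ S then 1 else 0) (a i) (b i) = if (a i ≠ b i ↔ i ∈ S) then 1 else 0 := by
    by_cases hi : i ∈ S
    · simp only [hi, if_true, iff_true, pauli_one_apply]
    · simp only [hi, if_false, iff_false, not_not, pauli_zero_apply]
  simp [pauliString, factor_apply, Fintype.prod_boole, Finset.ext_iff]

theorem sum_pauliString_X (F : Finset (Finset (Fin n))) :
    ∑ S ∈ F, pauliString n (fun i => if i ∈ S then 1 else 0) =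
      Matrix.of fun a b => if ({i | a i ≠ b i} : Finset (Fin n)) ∈ F then 1 else 0 := by
  ext a b
  simp only [Matrix.sum_apply, pauliString_X_apply, Finset.sum_ite_eq, Matrix.of_apply]

end XString

/-- For `1 ≤ m ≤ n`, the sum over all subsets `S` of cardinality `m` of
the Pauli strings with `X` on `S` and `I` elsewhere equals the Hamming distance `m`
matrix `T_{Ham(m)}`. -/
theorem sum_X_strings_eq_hamming (n m : ℕ) (hn : 1 ≤ n) (hm1 : 1 ≤ m) (hmn : m ≤ n) :
    (∑ S ∈ Finset.univ.filter (fun S : Finset (Fin n) => S.card = m),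
        pauliString n (fun i => if i ∈ S then 1 else 0)) =
      Matrix.of fun a b : Fin n → Fin 2 =>
        if hammingDist a b = m then (1 : ℂ) else 0 := by
  simp only [sum_pauliString_X, Finset.mem_filter_univ, hammingDist]
end

section
/- Let n ≥ 1 and, for d ∈ ℕ, let A_d be the real 2^n × 2^n matrix indexed by bitstrings a, b : Fin n → {0,1} whose (a,b) entry is 1 if the Hamming distance between a and b equals d, and 0 otherwise. Then for every k with 1 ≤ k ≤ n, A_k · A_1 = A_1 · A_k = (n − k + 1)·A_{k−1} + (k + 1)·A_{k+1} (where A_{n+1} is the zero matrix). -/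
open Matrix

/-- `hamMat n d` is the `2^n × 2^n` real matrix whose `(a,b)` entry is `1` if the
Hamming distance between the bitstrings `a` and `b` equals `d`, and `0` otherwise
(the matrix `T_{Ham(d)} = A_d`). -/
def hamMat (n d : ℕ) : Matrix (Fin n → Fin 2) (Fin n → Fin 2) ℝ :=
  Matrix.of fun a b => if hammingDist a b = d then 1 else 0

/-!
The words at Hamming distance one from `b` arise by replacing one letter `b i` by some `x ≠ b i`.
Let `q` be the number of letters and `d` the distance from `a` to `b`. Seen from `a`, each of the
`n - d` positions where `a` and `b` agree contributes `q - 1` words at distance `d + 1`; each of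
the `d` positions where they differ contributes one word at distance `d - 1` and `q - 2` words at
distance `d`. Reading off the words at distance `k` from `a` gives the entries of `A_k * A_1`,
which depend only on `d`; so the product is symmetric, and its symmetric factors commute.
-/

open Finset Function

section Neighbours

variable {ι : Type*} [Fintype ι] [DecidableEq ι] {β : ι → Type*} [∀ i, DecidableEq (β i)]

theorem hammingDist_update_add (a b : ∀ i, β i) (i : ι) (x : β i) :
    hammingDist a (update b i x) + (if a i = b i then 0 else 1) =
      hammingDist a b + if a i = x then 0 else 1 := by
  have off_i : ∑ j ∈ univ.erase i, (if a j = update b i x j then 0 else 1) =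
      ∑ j ∈ univ.erase i, if a j = b j then 0 else 1 :=
    sum_congr rfl fun j hj => by rw [update_of_ne (ne_of_mem_erase hj)]
  simp only [hammingDist, card_filter, ne_eq, ite_not, ← add_sum_erase univ _ (mem_univ i),
    off_i, update_self]
  ring

theorem hammingDist_update_self_eq_one (b : ∀ i, β i) {i : ι} {x : β i} (hx : x ≠ b i) :
    hammingDist (update b i x) b = 1 := by
  simpa [hx.symm, hammingDist_comm] using hammingDist_update_add b b i x

theorem exists_eq_update_of_hammingDist_eq_one {b c : ∀ i, β i} (h : hammingDist c b = 1) :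
    ∃ i, c i ≠ b i ∧ update b i (c i) = c := by
  obtain ⟨i, hi⟩ := card_eq_one.mp h
  have differ_iff (j : ι) : c j ≠ b j ↔ j = i := by simpa using Finset.ext_iff.mp hi j
  refine ⟨i, (differ_iff i).mpr rfl, update_eq_iff.mpr ⟨rfl, fun j hj => ?_⟩⟩
  exact (not_ne_iff.mp (mt (differ_iff j).mp hj)).symm

theorem sum_hammingDist_eq_one [∀ i, Fintype (β i)] {M : Type*} [AddCommMonoid M]
    (b : ∀ i, β i) (f : (∀ i, β i) → M) :
    ∑ c with hammingDist c b = 1, f c = ∑ i, ∑ x ∈ univ.erase (b i), f (update b i x) := by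
  rw [sum_sigma']
  symm
  refine sum_nbij (fun p => update b p.1 p.2) ?_ ?_ ?_ fun _ _ => rfl
  · rintro ⟨i, x⟩ hx
    simpa using hammingDist_update_self_eq_one b (by simpa using hx)
  · rintro ⟨i, x⟩ hx ⟨j, y⟩ - (h : update b i x = update b j y)
    obtain rfl : i = j := by
      by_contra hij
      have : x = b i := by simpa [hij] using congrFun h i
      simp [this] at hx
    rw [update_injective b i h]
  · intro c hc
    obtain ⟨i, hi, hc⟩ := exists_eq_update_of_hammingDist_eq_one (by simpa using hc)
    exact ⟨⟨i, c i⟩, by simpa using hi, hc⟩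

end Neighbours

section Radial

variable {ι α : Type*} [Fintype ι] [DecidableEq ι] [Fintype α] [DecidableEq α]
  {R : Type*} [Ring R]

theorem sum_update_hammingDist_of_eq (f : ℕ → R) {a b : ι → α} {i : ι} (h : a i = b i) :
    ∑ x ∈ univ.erase (b i), f (hammingDist a (update b i x)) =
      ((Fintype.card α : R) - 1) * f (hammingDist a b + 1) := by
  have dist_succ : ∀ x ∈ univ.erase (b i),
      f (hammingDist a (update b i x)) = f (hammingDist a b + 1) := fun x hx => by
    congr 1
    simpa [h, (ne_of_mem_erase hx).symm] using hammingDist_update_add a b i x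
  rw [sum_congr rfl dist_succ, sum_const, nsmul_eq_mul, cast_card_erase_of_mem (mem_univ _),
    card_univ]

theorem sum_update_hammingDist_of_ne (f : ℕ → R) {a b : ι → α} {i : ι} (h : a i ≠ b i) :
    ∑ x ∈ univ.erase (b i), f (hammingDist a (update b i x)) =
      f (hammingDist a b - 1) + ((Fintype.card α : R) - 2) * f (hammingDist a b) := by
  have mem_erase_b : a i ∈ univ.erase (b i) := by simpa using h
  have dist_pred : hammingDist a (update b i (a i)) = hammingDist a b - 1 :=
    Nat.eq_sub_of_add_eq (by simpa [h] using hammingDist_update_add a b i (a i))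
  have dist_same : ∀ x ∈ (univ.erase (b i)).erase (a i),
      f (hammingDist a (update b i x)) = f (hammingDist a b) := fun x hx => by
    congr 1
    simpa [h, (ne_of_mem_erase hx).symm] using hammingDist_update_add a b i x
  rw [← add_sum_erase _ _ mem_erase_b, dist_pred, sum_congr rfl dist_same, sum_const,
    nsmul_eq_mul, cast_card_erase_of_mem mem_erase_b, cast_card_erase_of_mem (mem_univ _),
    card_univ, sub_sub, one_add_one_eq_two]

theorem sum_hammingDist_eq_one_radial (f : ℕ → R) (a b : ι → α) :
    ∑ c with hammingDist c b = 1, f (hammingDist a c) =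
      (hammingDist a b : R) *
          (f (hammingDist a b - 1) + ((Fintype.card α : R) - 2) * f (hammingDist a b)) +
        ((Fintype.card ι : R) - hammingDist a b) *
          (((Fintype.card α : R) - 1) * f (hammingDist a b + 1)) := by
  have card_agree : (#{i | a i = b i} : R) = (Fintype.card ι : R) - hammingDist a b := by
    rw [eq_sub_iff_add_eq, hammingDist, ← Nat.cast_add, card_filter_add_card_filter_not, card_univ]
  rw [sum_hammingDist_eq_one, ← sum_filter_not_add_sum_filter univ (fun i => a i = b i),
    sum_congr rfl fun i hi => sum_update_hammingDist_of_ne f (mem_filter.mp hi).2,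
    sum_congr rfl fun i hi => sum_update_hammingDist_of_eq f (mem_filter.mp hi).2,
    sum_const, sum_const, nsmul_eq_mul, nsmul_eq_mul, card_agree, hammingDist]

end Radial

/-- The `d`-th distance matrix of the Hamming scheme of words indexed by `ι` over the alphabet
`α`, with entries in `R`; it generalizes `hamMat` beyond bitstrings and real entries. -/
def hammingMatrix (R ι α : Type*) [Zero R] [One R] [Fintype ι] [DecidableEq α] (d : ℕ) :
    Matrix (ι → α) (ι → α) R :=
  Matrix.of fun a b => if hammingDist a b = d then 1 else 0

theorem hamMat_eq_hammingMatrix (n d : ℕ) : hamMat n d = hammingMatrix ℝ (Fin n) (Fin 2) d :=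
  rfl

section HammingMatrix

variable {R ι α : Type*} [Fintype ι] [DecidableEq α]

theorem hammingMatrix_apply [Zero R] [One R] (d : ℕ) (a b : ι → α) :
    hammingMatrix R ι α d a b = if hammingDist a b = d then 1 else 0 :=
  rfl

theorem transpose_hammingMatrix [Zero R] [One R] (d : ℕ) :
    (hammingMatrix R ι α d)ᵀ = hammingMatrix R ι α d := by
  ext a b
  simp only [transpose_apply, hammingMatrix_apply, hammingDist_comm]

variable [DecidableEq ι] [Fintype α]

theorem transpose_hammingMatrix_mul [NonAssocSemiring R] (j k : ℕ) :
    (hammingMatrix R ι α j * hammingMatrix R ι α k)ᵀ =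
      hammingMatrix R ι α k * hammingMatrix R ι α j := by
  ext a b
  simp only [transpose_apply, mul_apply, hammingMatrix_apply, hammingDist_comm b,
    hammingDist_comm _ a, ite_zero_mul_ite_zero, mul_one, and_comm]

theorem hammingMatrix_mul_hammingMatrix_one [Ring R] {k : ℕ} (hk : 1 ≤ k) :
    hammingMatrix R ι α k * hammingMatrix R ι α 1 =
      (((Fintype.card ι : R) - k + 1) * ((Fintype.card α : R) - 1)) • hammingMatrix R ι α (k - 1) +
        ((k : R) * ((Fintype.card α : R) - 2)) • hammingMatrix R ι α k +
        ((k : R) + 1) • hammingMatrix R ι α (k + 1) := by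
  obtain ⟨k, rfl⟩ := Nat.exists_eq_add_of_le' hk
  ext a b
  have entry_eq_sum : (hammingMatrix R ι α (k + 1) * hammingMatrix R ι α 1) a b =
      ∑ c with hammingDist c b = 1, if hammingDist a c = k + 1 then 1 else 0 := by
    simp only [mul_apply, hammingMatrix_apply, mul_ite, mul_one, mul_zero, sum_filter]
  rw [entry_eq_sum, sum_hammingDist_eq_one_radial fun d => if d = k + 1 then (1 : R) else 0]
  simp only [Matrix.add_apply, Matrix.smul_apply, smul_eq_mul, hammingMatrix_apply]
  obtain h | h | h | h : hammingDist a b = k ∨ hammingDist a b = k + 1 ∨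
      hammingDist a b = k + 2 ∨ (hammingDist a b ≠ k ∧ hammingDist a b ≠ k + 1 ∧
        hammingDist a b ≠ k + 2) := by omega
  all_goals simp [h, ← sub_sub, add_assoc, one_add_one_eq_two]

theorem hamming_matrix_recursion_general [Ring R] {k : ℕ} (hk : 1 ≤ k) :
    hammingMatrix R ι α k * hammingMatrix R ι α 1 =
      hammingMatrix R ι α 1 * hammingMatrix R ι α k ∧
    hammingMatrix R ι α k * hammingMatrix R ι α 1 =
      (((Fintype.card ι : R) - k + 1) * ((Fintype.card α : R) - 1)) • hammingMatrix R ι α (k - 1) +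
        ((k : R) * ((Fintype.card α : R) - 2)) • hammingMatrix R ι α k +
        ((k : R) + 1) • hammingMatrix R ι α (k + 1) := by
  refine ⟨?_, hammingMatrix_mul_hammingMatrix_one hk⟩
  rw [← transpose_hammingMatrix_mul k 1, hammingMatrix_mul_hammingMatrix_one hk]
  simp only [transpose_add, transpose_smul, transpose_hammingMatrix]

end HammingMatrix

/-- For `1 ≤ k ≤ n`,
`A_k · A_1 = A_1 · A_k = (n - k + 1) • A_{k-1} + (k + 1) • A_{k+1}`. -/
theorem hamming_matrix_recursion (n : ℕ) (hn : 1 ≤ n) (k : ℕ) (hk1 : 1 ≤ k)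
    (hkn : k ≤ n) :
    hamMat n k * hamMat n 1 = hamMat n 1 * hamMat n k ∧
    hamMat n k * hamMat n 1 =
      ((n : ℝ) - (k : ℝ) + 1) • hamMat n (k - 1) + ((k : ℝ) + 1) • hamMat n (k + 1) := by
  simp only [hamMat_eq_hammingMatrix]
  convert hamming_matrix_recursion_general (R := ℝ) (ι := Fin n) (α := Fin 2) hk1 using 2
  norm_num
end
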